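/- Let (W, S) be a Coxeter system whose Coxeter graph is bipartite, with 2-colouring ε. Let w ∈ W_c be such that |𝓛(w)| = n(w) (respectively |𝓡(w)| = n(w)), and suppose w is left (respectively right) star reducible to x ∈ W_c. Then k_ε(w) = −k_ε(x). -/

import Mathlib

open CoxeterSystem

variable {B W : Type*} [Group W] {M : CoxeterMatrix B} (cs : CoxeterSystem M W)

/-- `m(s,t) ≥ 3`: `s` and `t` are distinct noncommuting generators
(`M s t = 0` encodes `m(s,t) = ∞`). -/
def Noncomm (M : CoxeterMatrix B) (s t : B) : Prop := M s t = 0 ∨ 3 ≤ M s t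

/-- The longest element `w_{st}` of the rank-2 parabolic subgroup `⟨s,t⟩`
(meaningful when `3 ≤ M s t < ∞`). -/
def longest (s t : B) : W := cs.wordProd (alternatingWord s t (M s t))

/-- `w` is complex: it admits a reduced factorization `x₁ · w_{st} · x₂` where `w_{st}`
is the longest element of a rank-2 parabolic subgroup `⟨s,t⟩` with `3 ≤ m(s,t) < ∞`. -/
def IsComplex (w : W) : Prop :=
  ∃ s t : B, 3 ≤ M s t ∧ ∃ x₁ x₂ : W,
    w = x₁ * longest cs s t * x₂ ∧
    cs.length w = cs.length x₁ + cs.length (longest cs s t : W) + cs.length x₂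

/-- `w` is fully commutative, i.e. `w ∈ W_c`. -/
def FullyComm (w : W) : Prop := ¬ IsComplex cs w

/-- `x` is weakly complex: `x` is complex and `x = s·u` reduced with `u` fully commutative. -/
def IsWeaklyComplex (x : W) : Prop :=
  IsComplex cs x ∧ ∃ (s : B) (u : W), FullyComm cs u ∧ x = cs.simple s * u ∧
    cs.length x = 1 + cs.length u

/-- The alternating product `t s t s ⋯` with `k` factors, beginning with `t`. -/
def altProd (t s : B) (k : ℕ) : W :=
  cs.wordProd ((List.range k).map (fun i => if i % 2 = 0 then t else s))

/-- The left descent set `𝓛(w)`. -/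
def leftDescents (w : W) : Set B := {i | cs.IsLeftDescent w i}

/-- The right descent set `𝓡(w)`. -/
def rightDescents (w : W) : Set B := {i | cs.IsRightDescent w i}

/-- `w` is a reduced product of distinct pairwise commuting generators. -/
def IsCommProd (w : W) : Prop :=
  ∃ l : List B, l.Nodup ∧ (∀ u ∈ l, ∀ u' ∈ l, u ≠ u' → M u u' = 2) ∧
    cs.IsReduced l ∧ w = cs.wordProd l

/-- `y` is left star reducible to `x` with respect to the pair `{s,t}`:
`x` and `y` lie in the same left `{s,t}`-string and `ℓ(x) = ℓ(y) − 1`. -/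
def LeftStarReducible (s t : B) (y x : W) : Prop :=
  Noncomm M s t ∧
  ((cs.IsLeftDescent y s ∧ ¬ cs.IsLeftDescent y t ∧ x = cs.simple s * y ∧
      cs.IsLeftDescent x t) ∨
   (cs.IsLeftDescent y t ∧ ¬ cs.IsLeftDescent y s ∧ x = cs.simple t * y ∧
      cs.IsLeftDescent x s))

/-- `y` is right star reducible to `x` with respect to the pair `{s,t}`. -/
def RightStarReducible (s t : B) (y x : W) : Prop :=
  Noncomm M s t ∧
  ((cs.IsRightDescent y s ∧ ¬ cs.IsRightDescent y t ∧ x = y * cs.simple s ∧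
      cs.IsRightDescent x t) ∨
   (cs.IsRightDescent y t ∧ ¬ cs.IsRightDescent y s ∧ x = y * cs.simple t ∧
      cs.IsRightDescent x s))

/-- `y` is star reducible to `x`: there is a (possibly empty) chain of left and right
star reductions from `y` to `x`. -/
def StarReducible (y x : W) : Prop :=
  Relation.ReflTransGen
    (fun a b => ∃ s t : B, LeftStarReducible cs s t a b ∨ RightStarReducible cs s t a b) y x

/-- Property F: every fully commutative element is star reducible to a reduced product of
distinct pairwise commuting generators. -/
def PropertyF : Prop := ∀ w : W, FullyComm cs w → ∃ x : W, StarReducible cs w x ∧ IsCommProd cs x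

/-- `n(w)`: the maximum `k` such that `w` admits a reduced factorization `w = w₁·w₂·w₃`
with `w₂` a reduced product of `k` distinct pairwise commuting generators. -/
noncomputable def nval (w : W) : ℕ :=
  sSup {k | ∃ w₁ w₂ w₃ : W, w = w₁ * w₂ * w₃ ∧
    cs.length w = cs.length w₁ + cs.length w₂ + cs.length w₃ ∧
    IsCommProd cs w₂ ∧ cs.length w₂ = k}

/-- The Bruhat order: `x ≤ w` iff some reduced word for `w` has a subword that is a
reduced word for `x`. -/
def BruhatLE (x w : W) : Prop :=
  ∃ l l' : List B, cs.IsReduced l ∧ cs.wordProd l = w ∧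
    l'.Sublist l ∧ cs.IsReduced l' ∧ cs.wordProd l' = x

/-- `w = wI · wII` is the coset decomposition of `w` with respect to `I = {s,t}`:
`wI ∈ W_I`, `𝓛(wII) ∩ I = ∅` and `ℓ(w) = ℓ(wI) + ℓ(wII)`. -/
def CosetDecompL (s t : B) (w wI wII : W) : Prop :=
  w = wI * wII ∧ wI ∈ Subgroup.closure {cs.simple s, cs.simple t} ∧
  ¬ cs.IsLeftDescent wII s ∧ ¬ cs.IsLeftDescent wII t ∧
  cs.length w = cs.length wI + cs.length wII

/-- `w = wII · wI` is the right coset decomposition of `w` with respect to `I = {s,t}`: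
`wI ∈ W_I`, `𝓡(wII) ∩ I = ∅` and `ℓ(w) = ℓ(wII) + ℓ(wI)`. -/
def CosetDecompR (s t : B) (w wII wI : W) : Prop :=
  w = wII * wI ∧ wI ∈ Subgroup.closure {cs.simple s, cs.simple t} ∧
  ¬ cs.IsRightDescent wII s ∧ ¬ cs.IsRightDescent wII t ∧
  cs.length w = cs.length wII + cs.length wI

/-- `k_ε(J) = (−1)^{|J ∩ ε⁻¹(0)|}` for a set `J` of generators. -/
noncomputable def kSet (ε : B → Bool) (J : Set B) : ℤ :=
  (-1) ^ (J ∩ {i | ε i = false}).ncard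

/-- `k_ε(w) = k_ε(𝓛(w)) · k_ε(𝓡(w))`. -/
noncomputable def kElt (ε : B → Bool) (w : W) : ℤ :=
  kSet ε (leftDescents cs w) * kSet ε (rightDescents cs w)

noncomputable section

open Module Polynomial.Chebyshev

/-- The pairing `⟨αᵢ^∨, αⱼ⟩ = -2 cos (π / m(i,j))`; since `π / 0 = 0`, it is `-2` when
`m(i,j) = ∞`. -/
def coxPairing (M : CoxeterMatrix B) (i j : B) : ℝ := -2 * Real.cos (Real.pi / (M i j : ℝ))

/-- The simple coroot of `i`, as a linear form on the span of the simple roots. -/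
def simpleCoroot (M : CoxeterMatrix B) (i : B) : Dual ℝ (B →₀ ℝ) :=
  Finsupp.linearCombination ℝ (coxPairing M i)

lemma simpleCoroot_single (i j : B) :
    simpleCoroot M i (Finsupp.single j 1) = coxPairing M i j := by
  simp [simpleCoroot]

lemma simpleCoroot_self (i : B) : simpleCoroot M i (Finsupp.single i 1) = 2 := by
  simp [simpleCoroot_single, coxPairing]

lemma coxPairing_symm (i j : B) : coxPairing M i j = coxPairing M j i := by
  rw [coxPairing, M.symmetric, coxPairing]

/-- The simple reflection of `i` in the geometric representation. -/
def geomReflection (M : CoxeterMatrix B) (i : B) : (B →₀ ℝ) ≃ₗ[ℝ] (B →₀ ℝ) :=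
  reflection (simpleCoroot_self (M := M) i)

lemma coxPairing_mul_sub_two (i j : B) :
    2 * Real.cos (2 * (Real.pi / (M i j : ℝ))) =
      simpleCoroot M i (Finsupp.single j 1) * simpleCoroot M j (Finsupp.single i 1) - 2 := by
  rw [simpleCoroot_single, simpleCoroot_single, coxPairing_symm j i, coxPairing, Real.cos_two_mul]
  ring

lemma sin_two_pi_div_pos {m : ℕ} (hm : 3 ≤ m) : 0 < Real.sin (2 * (Real.pi / (m : ℝ))) := by
  have hm' : (3 : ℝ) ≤ m := by exact_mod_cast hm
  apply Real.sin_pos_of_pos_of_lt_pi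
  · positivity
  · rw [← mul_div_assoc, div_lt_iff₀ (by positivity)]
    nlinarith [Real.pi_pos]

lemma isLiftable_geomReflection : M.IsLiftable (geomReflection M) := by
  intro i j
  rcases eq_or_ne i j with rfl | hij
  · rw [M.diagonal, pow_one, mul_eq_one_iff_eq_inv, geomReflection, reflection_inv]
  ext1 z
  rw [geomReflection, geomReflection,
    reflection_mul_reflection_pow_apply _ _ _ _ _ (coxPairing_mul_sub_two i j)]
  set θ := 2 * (Real.pi / (M i j : ℝ)) with hθ
  have hS (k : ℤ) := S_two_mul_real_cos θ k
  rcases Nat.lt_or_ge (M i j) 3 with h3 | h3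
  · have h02 : M i j = 0 ∨ M i j = 2 := by
      have := M.off_diagonal i j hij
      omega
    rcases h02 with h | h
    · simp [h]
    · have hc : coxPairing M i j = 0 := by simp [coxPairing, h]
      have hc' : coxPairing M j i = 0 := by rw [coxPairing_symm, hc]
      have ht : 2 * Real.cos θ = -2 := by
        rw [hθ, h]; push_cast
        rw [mul_div_cancel₀ _ two_ne_zero]; simp
      rw [ht]
      simp [h, simpleCoroot_single, hc, hc']
      module
  · have hsin : Real.sin θ ≠ 0 := (sin_two_pi_div_pos h3).ne'
    have hm0 : (M i j : ℝ) ≠ 0 := by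
      have : M i j ≠ 0 := by omega
      exact_mod_cast this
    have hmθ : (M i j : ℝ) * θ = 2 * Real.pi := by rw [hθ]; field_simp
    rcases Nat.even_or_odd' (M i j) with ⟨k, hk | hk⟩
    · have h0 : (S ℝ ((k : ℤ) - 1)).eval (2 * Real.cos θ) = 0 := by
        have := hS (k - 1)
        have hkθ : ((((k : ℤ) - 1 : ℤ) : ℝ) + 1) * θ = Real.pi := by
          rw [hk] at hmθ; push_cast at hmθ ⊢; linarith
        rw [hkθ, Real.sin_pi] at this
        exact (mul_eq_zero.mp this).resolve_right hsin
      have e1 : (((M i j : ℕ) : ℤ) - 2) / 2 = k - 1 := by omega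
      have e2 : (((M i j : ℕ) : ℤ) - 1) / 2 = k - 1 := by omega
      rw [e1, e2, h0]
      simp
    · have h0 : (S ℝ (k : ℤ)).eval (2 * Real.cos θ) +
          (S ℝ ((k : ℤ) - 1)).eval (2 * Real.cos θ) = 0 := by
        have h1 := hS k
        have h2 := hS (k - 1)
        have hkθ : (((k : ℤ) : ℝ) + 1) * θ =
            2 * Real.pi - ((((k : ℤ) - 1 : ℤ) : ℝ) + 1) * θ := by
          rw [hk] at hmθ; push_cast at hmθ ⊢; linarith
        rw [hkθ, Real.sin_two_pi_sub] at h1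
        refine (mul_eq_zero.mp ?_).resolve_right hsin
        rw [add_mul, h1, h2]; ring
      have e1 : (((M i j : ℕ) : ℤ) - 1) / 2 = k := by omega
      have e2 : (((M i j : ℕ) : ℤ) - 3) / 2 = k - 1 := by omega
      have e3 : ((M i j : ℕ) : ℤ) / 2 = k := by omega
      have e4 : (((M i j : ℕ) : ℤ) - 2) / 2 = k - 1 := by omega
      rw [e1, e2, e3, e4, h0]
      simp

lemma simple_mul_simple_pow_ne_one {i j : B} (hij : i ≠ j) {k : ℕ} (hk : 0 < k)
    (hkM : M i j = 0 ∨ k < M i j) : (cs.simple i * cs.simple j) ^ k ≠ 1 := by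
  intro h
  have h' := congrArg (cs.lift ⟨_, isLiftable_geomReflection⟩) h
  rw [map_pow, map_mul, map_one, cs.lift_apply_simple, cs.lift_apply_simple] at h'
  have hx := congrArg (fun g : (B →₀ ℝ) ≃ₗ[ℝ] (B →₀ ℝ) => g (Finsupp.single i 1)) h'
  simp only [geomReflection] at hx
  rw [reflection_mul_reflection_pow_apply_self _ _ _ _ (coxPairing_mul_sub_two i j),
    simpleCoroot_single] at hx
  set θ := 2 * (Real.pi / (M i j : ℝ)) with hθ
  have hxi := DFunLike.congr_fun hx i
  have hxj := DFunLike.congr_fun hx j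
  simp [hij, hij.symm] at hxi hxj
  rw [simpleCoroot_single] at hxj
  have h1 : M i j ≠ 1 := M.off_diagonal i j hij
  rcases Nat.lt_or_ge (M i j) 3 with h3 | h3
  · have h02 : M i j = 0 ∨ M i j = 2 := by omega
    rcases h02 with hM | hM
    · have hθ0 : θ = 0 := by simp [hθ, hM]
      have hc : coxPairing M j i = -2 := by rw [coxPairing_symm, coxPairing, hM]; simp
      rw [hc, hθ0, Real.cos_zero, mul_one, S_eval_two] at hxj
      norm_num at hxj
      omega
    · obtain rfl : k = 1 := by omega
      have ht : 2 * Real.cos θ = -2 := by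
        rw [hθ, hM]; push_cast
        rw [mul_div_cancel₀ _ two_ne_zero]; simp
      rw [ht] at hxi
      norm_num at hxi
  · have hs := sin_two_pi_div_pos h3
    rw [← hθ] at hs
    have hm0 : (0 : ℝ) < M i j := by
      have : 0 < M i j := by omega
      exact_mod_cast this
    have hkM : k < M i j := by omega
    have hc : coxPairing M j i ≠ 0 := by
      intro hc
      rw [coxPairing_symm, coxPairing] at hc
      have : Real.sin θ = 0 := by
        rw [hθ, Real.sin_two_mul]; linear_combination -Real.sin (Real.pi / (M i j : ℝ)) * hc
      exact hs.ne' this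
    have hS1 := S_two_mul_real_cos θ (k - 1 : ℤ)
    have hS2 := S_two_mul_real_cos θ (k : ℤ)
    have h0 := hxj.resolve_right hc
    rw [h0] at hS1 hxi
    rw [add_zero] at hxi
    rw [hxi] at hS2
    push_cast at hS1 hS2
    have hsk : Real.sin (k * θ) = 0 := by rw [← zero_mul (Real.sin θ), hS1]; ring_nf
    rw [add_mul, one_mul, one_mul, Real.sin_add, hsk] at hS2
    have hck : Real.cos (k * θ) = 1 := by
      apply mul_right_cancel₀ hs.ne'; linarith
    obtain ⟨n, hn⟩ := (Real.cos_eq_one_iff _).mp hck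
    have hn' : (n : ℝ) * M i j = k := by
      rw [hθ] at hn
      field_simp at hn
      have := Real.pi_pos
      nlinarith
    have hn'' : n * (M i j : ℤ) = k := by exact_mod_cast hn'
    have hdvd : (M i j : ℤ) ∣ k := ⟨n, by rw [← hn'']; ring⟩
    have := Nat.le_of_dvd hk (Int.natCast_dvd_natCast.mp hdvd)
    omega
end

noncomputable section

open Classical in
/-- The involution of `W × ℤ/2` attached to a generator: it conjugates the first component by
`sᵢ`, and changes the sign exactly when the first component is `sᵢ`. -/
def signedConj (i : B) : Function.End (W × ZMod 2) :=
  fun p => (cs.simple i * p.1 * cs.simple i, p.2 + if p.1 = cs.simple i then 1 else 0)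

open Classical in
lemma signedConj_mul_pow_apply (i j : B) (k : ℕ) (p : W × ZMod 2) :
    ((signedConj cs i * signedConj cs j) ^ k) p =
      ((cs.simple i * cs.simple j) ^ k * p.1 * (cs.simple j * cs.simple i) ^ k,
        p.2 + ∑ q ∈ Finset.range (2 * k),
          if p.1 = (cs.simple j * cs.simple i) ^ q * cs.simple j then 1 else 0) := by
  induction k with
  | zero => simp; rfl
  | succ k ih =>
    have hinv : (cs.simple j * cs.simple i) ^ k = ((cs.simple i * cs.simple j) ^ k)⁻¹ := by
      rw [← inv_pow, mul_inv_rev, cs.inv_simple, cs.inv_simple]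
    have hji (n : ℕ) : (cs.simple j * cs.simple i) ^ n * cs.simple j =
        cs.simple j * (cs.simple i * cs.simple j) ^ n := by
      rw [mul_pow_mul]
    have hconj (g x v : W) : g * v * g⁻¹ = x ↔ v = g⁻¹ * x * g := by
      constructor <;> rintro rfl <;> group
    have h₁ (v : W) : (cs.simple i * cs.simple j) ^ k * v * (cs.simple j * cs.simple i) ^ k =
        cs.simple j ↔ v = (cs.simple j * cs.simple i) ^ (2 * k) * cs.simple j := by
      rw [two_mul, pow_add, mul_assoc _ _ (cs.simple j), hji, hinv, hconj, mul_assoc]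
    have h₂ (v : W) : cs.simple j * ((cs.simple i * cs.simple j) ^ k * v *
        (cs.simple j * cs.simple i) ^ k) * cs.simple j = cs.simple i ↔
        v = (cs.simple j * cs.simple i) ^ (2 * k + 1) * cs.simple j := by
      have hj (x : W) : cs.simple j * x * cs.simple j = cs.simple i ↔
          x = cs.simple j * cs.simple i * cs.simple j := by
        simpa only [cs.inv_simple] using hconj (cs.simple j) (cs.simple i) x
      have he : (cs.simple j * cs.simple i) ^ (2 * k + 1) * cs.simple j =
          (cs.simple j * cs.simple i) ^ k * (cs.simple j * cs.simple i) *
            ((cs.simple j * cs.simple i) ^ k * cs.simple j) := by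
        rw [two_mul, add_right_comm, pow_add, pow_succ, mul_assoc]
      rw [hj, he, hji, hinv, hconj]
      simp only [mul_assoc]
    rw [pow_succ']
    change signedConj cs i (signedConj cs j (((signedConj cs i * signedConj cs j) ^ k) p)) = _
    rw [ih, signedConj, signedConj]
    refine Prod.ext ?_ ?_
    · rw [pow_succ' (cs.simple i * _), pow_succ (cs.simple j * _)]
      simp only [mul_assoc]
    · simp only
      rw [show 2 * (k + 1) = 2 * k + 1 + 1 by ring, Finset.sum_range_succ, Finset.sum_range_succ,
        ← add_assoc, ← add_assoc]
      simp only [h₁, h₂]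

lemma isLiftable_signedConj : M.IsLiftable (signedConj cs) := by
  classical
  intro i j
  funext p
  rw [signedConj_mul_pow_apply, cs.simple_mul_simple_pow, cs.simple_mul_simple_pow', one_mul,
    mul_one, two_mul, Finset.sum_range_add]
  simp only [pow_add, cs.simple_mul_simple_pow', one_mul]
  rw [CharTwo.add_self_eq_zero, add_zero]
  rfl

open Classical in
lemma lift_signedConj_wordProd (ω : List B) (p : W × ZMod 2) :
    cs.lift ⟨_, isLiftable_signedConj cs⟩ (cs.wordProd ω) p =
      (cs.wordProd ω * p.1 * (cs.wordProd ω)⁻¹, p.2 + ((cs.rightInvSeq ω).count p.1 : ℕ)) := by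
  induction ω with
  | nil => simp; rfl
  | cons i ω ih =>
    rw [cs.wordProd_cons, map_mul, cs.lift_apply_simple]
    change signedConj cs i (cs.lift ⟨_, isLiftable_signedConj cs⟩ (cs.wordProd ω) p) = _
    rw [ih, signedConj, rightInvSeq]
    refine Prod.ext (by simp [mul_assoc]) ?_
    simp only [List.count_cons, beq_iff_eq]
    have : cs.wordProd ω * p.1 * (cs.wordProd ω)⁻¹ = cs.simple i ↔
        (cs.wordProd ω)⁻¹ * cs.simple i * cs.wordProd ω = p.1 := by
      constructor <;> intro h
      · rw [← h]; group
      · rw [← h]; group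
    simp only [this]
    push_cast
    rw [add_assoc]

lemma simple_mem_rightInvSeq {ω : List B} {i : B} (h : cs.IsRightDescent (cs.wordProd ω) i) :
    cs.simple i ∈ cs.rightInvSeq ω := by
  classical
  obtain ⟨ω', hω', hw⟩ := cs.exists_isReduced (cs.wordProd ω * cs.simple i)
  have hnot : cs.simple i ∉ cs.rightInvSeq ω' := by
    intro hmem
    have := (cs.isRightInversion_of_mem_rightInvSeq hω' hmem).2
    rw [← hw, cs.simple_mul_simple_cancel_right] at this
    exact lt_asymm h this
  have key := lift_signedConj_wordProd cs ω (cs.simple i, 0)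
  have hdecomp : cs.wordProd ω = cs.wordProd ω' * cs.simple i := by
    rw [← hw, cs.simple_mul_simple_cancel_right]
  have e : cs.lift ⟨_, isLiftable_signedConj cs⟩ (cs.wordProd ω) (cs.simple i, 0) =
      cs.lift ⟨_, isLiftable_signedConj cs⟩ (cs.wordProd ω') (cs.simple i, 1) := by
    rw [hdecomp, map_mul, cs.lift_apply_simple]
    change cs.lift ⟨_, isLiftable_signedConj cs⟩ (cs.wordProd ω')
      (signedConj cs i (cs.simple i, 0)) = _
    simp [signedConj]
  rw [e, lift_signedConj_wordProd] at key
  have key2 := congrArg Prod.snd key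
  simp only [List.count_eq_zero_of_not_mem hnot] at key2
  by_contra hmem
  simp [List.count_eq_zero_of_not_mem hmem] at key2

lemma simple_mem_leftInvSeq {ω : List B} {i : B} (h : cs.IsLeftDescent (cs.wordProd ω) i) :
    cs.simple i ∈ cs.leftInvSeq ω := by
  have h' : cs.IsRightDescent (cs.wordProd ω.reverse) i := by
    rwa [cs.wordProd_reverse, cs.isRightDescent_inv_iff]
  have := simple_mem_rightInvSeq cs h'
  rwa [cs.rightInvSeq_reverse, List.mem_reverse] at this

lemma leftInvSeq_append (ω ω' : List B) : cs.leftInvSeq (ω ++ ω') =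
    cs.leftInvSeq ω ++ (cs.leftInvSeq ω').map (MulAut.conj (cs.wordProd ω)) := by
  induction ω with
  | nil => simp
  | cons i ω ih =>
    simp only [List.cons_append, leftInvSeq, ih, List.map_append, List.map_map, cs.wordProd_cons,
      map_mul]
    rfl

/-- If `i` is a left descent of a reduced product `u * y` but not of `u`, then moving `sᵢ` past `u`
shortens `y`. -/
lemma length_conj_mul_of_isLeftDescent {u y : W} {i : B}
    (h : cs.length (u * y) = cs.length u + cs.length y) (hd : cs.IsLeftDescent (u * y) i)
    (hu : ¬ cs.IsLeftDescent u i) : cs.length (u⁻¹ * cs.simple i * u * y) + 1 = cs.length y := by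
  obtain ⟨ωu, hωu, rfl⟩ := cs.exists_isReduced u
  obtain ⟨ωy, hωy, rfl⟩ := cs.exists_isReduced y
  rw [← cs.wordProd_append] at hd
  have hmem := simple_mem_leftInvSeq cs hd
  rw [leftInvSeq_append, List.mem_append, List.mem_map] at hmem
  rcases hmem with hmem | ⟨r, hr, hri⟩
  · exact absurd (cs.isLeftInversion_of_mem_leftInvSeq hωu hmem).2 hu
  · have hlt := (cs.isLeftInversion_of_mem_leftInvSeq hωy hr).2
    have hr' : (cs.wordProd ωu)⁻¹ * cs.simple i * cs.wordProd ωu = r := by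
      rw [← hri, MulAut.conj_apply]; group
    rw [hr']
    have e : cs.wordProd ωu * cs.wordProd ωy =
        cs.simple i * (cs.wordProd ωu * (r * cs.wordProd ωy)) := by
      rw [← hr']
      simp [mul_assoc]
    have h1 := cs.length_mul_le (cs.simple i) (cs.wordProd ωu * (r * cs.wordProd ωy))
    have h2 := cs.length_mul_le (cs.wordProd ωu) (r * cs.wordProd ωy)
    rw [← e, cs.length_simple, h] at h1
    omega

/-- The word of length `k` that alternates between `a` and `b`, beginning with `a`. -/
def alternatingFrom (a b : B) : ℕ → List B
  | 0 => []
  | k + 1 => a :: alternatingFrom b a k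

@[simp] lemma length_alternatingFrom (a b : B) (k : ℕ) : (alternatingFrom a b k).length = k := by
  induction k generalizing a b with
  | zero => rfl
  | succ k ih => simp [alternatingFrom, ih]

lemma reverse_alternatingWord (a b : B) (k : ℕ) :
    (alternatingWord a b k).reverse = alternatingFrom b a k := by
  induction k generalizing a b with
  | zero => rfl
  | succ k ih => simp [alternatingWord_succ, alternatingFrom, ← ih]

lemma alternatingWord_eq_alternatingFrom (a b : B) (k : ℕ) :
    alternatingWord a b k = if Even k then alternatingFrom a b k else alternatingFrom b a k := by
  induction k with
  | zero => rfl
  | succ k ih =>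
    rw [alternatingWord_succ', ih]
    by_cases hk : Even k <;> simp [hk, Nat.even_add_one, alternatingFrom]

lemma wordProd_alternatingFrom_eq_longest (a b : B) :
    cs.wordProd (alternatingFrom a b (M a b)) = longest cs a b := by
  rw [longest]
  by_cases hk : Even (M a b)
  · rw [alternatingWord_eq_alternatingFrom, if_pos hk]
  · rw [← braidWord, cs.wordProd_braidWord_eq, braidWord, alternatingWord_eq_alternatingFrom,
      M.symmetric b a, if_neg hk]

lemma exists_pow_of_mem_leftInvSeq_alternatingFrom {a b : B} {k : ℕ} {r : W}
    (hr : r ∈ cs.leftInvSeq (alternatingFrom b a k)) :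
    ∃ q < k, r = (cs.simple b * cs.simple a) ^ q * cs.simple b := by
  induction k generalizing a b r with
  | zero => simp [alternatingFrom] at hr
  | succ k ih =>
    rw [alternatingFrom, leftInvSeq, List.mem_cons, List.mem_map] at hr
    rcases hr with rfl | ⟨r', hr', rfl⟩
    · exact ⟨0, by omega, by simp⟩
    · obtain ⟨q, hq, rfl⟩ := ih hr'
      refine ⟨q + 1, by omega, ?_⟩
      rw [MulAut.conj_apply, cs.inv_simple, pow_succ, ← mul_assoc, ← mul_pow_mul]
      simp only [mul_assoc]

lemma not_isLeftDescent_alternatingFrom {a b : B} (hab : a ≠ b) {k : ℕ}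
    (hk : M a b = 0 ∨ k < M a b) :
    ¬ cs.IsLeftDescent (cs.wordProd (alternatingFrom b a k)) a := by
  intro h
  obtain ⟨q, hq, hr⟩ := exists_pow_of_mem_leftInvSeq_alternatingFrom cs (simple_mem_leftInvSeq cs h)
  refine simple_mul_simple_pow_ne_one cs hab.symm (k := q + 1) (by omega)
    (by rw [M.symmetric b a]; omega) ?_
  rw [pow_succ, ← mul_assoc, ← hr, cs.simple_mul_simple_self]

lemma isReduced_alternatingFrom {a b : B} (hab : a ≠ b) {k : ℕ} (hk : M a b = 0 ∨ k ≤ M a b) :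
    cs.IsReduced (alternatingFrom a b k) := by
  induction k generalizing a b with
  | zero => simp [alternatingFrom, CoxeterSystem.IsReduced]
  | succ k ih =>
    have h := not_isLeftDescent_alternatingFrom cs hab (k := k) (by omega)
    have ih' := ih hab.symm (by rw [M.symmetric b a]; omega)
    rw [cs.not_isLeftDescent_iff] at h
    rw [CoxeterSystem.IsReduced, length_alternatingFrom] at ih' ⊢
    rw [alternatingFrom, cs.wordProd_cons, h, ih']

/-- An element with distinct left descents `a` and `b` begins with every alternating word in
`a` and `b` of length at most `m(a,b)`. -/
lemma exists_eq_alternatingFrom_mul {w : W} {a b : B} (hab : a ≠ b)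
    (ha : cs.IsLeftDescent w a) (hb : cs.IsLeftDescent w b) {k : ℕ}
    (hk : M a b = 0 ∨ k ≤ M a b) :
    ∃ y, w = cs.wordProd (alternatingFrom a b k) * y ∧ cs.length w = k + cs.length y := by
  induction k generalizing a b with
  | zero => exact ⟨w, by simp [alternatingFrom], by simp⟩
  | succ k ih =>
    have hk' : M b a = 0 ∨ k ≤ M b a := by rw [M.symmetric b a]; omega
    obtain ⟨y, hy, hl⟩ := ih hab.symm hb ha hk'
    have hred := isReduced_alternatingFrom cs hab.symm hk'
    rw [CoxeterSystem.IsReduced, length_alternatingFrom] at hred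
    set u := cs.wordProd (alternatingFrom b a k) with hu
    have hlen : cs.length (u * y) = cs.length u + cs.length y := by rw [← hy, hl, hred]
    rw [hy] at ha
    have := length_conj_mul_of_isLeftDescent cs hlen ha
      (not_isLeftDescent_alternatingFrom cs hab (by omega))
    refine ⟨u⁻¹ * cs.simple a * u * y, ?_, by omega⟩
    rw [alternatingFrom, cs.wordProd_cons, ← hu, hy]
    simp [mul_assoc]

lemma coxeterMatrix_eq_two_of_fullyComm {w : W} (hw : FullyComm cs w) {a b : B} (hab : a ≠ b)
    (ha : cs.IsLeftDescent w a) (hb : cs.IsLeftDescent w b) : M a b = 2 := by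
  have h1 := M.off_diagonal a b hab
  rcases Nat.eq_zero_or_pos (M a b) with h0 | h0
  · obtain ⟨y, -, hl⟩ := exists_eq_alternatingFrom_mul cs hab ha hb (k := cs.length w + 1)
      (Or.inl h0)
    omega
  · by_contra h2
    obtain ⟨y, hy, hl⟩ := exists_eq_alternatingFrom_mul cs hab ha hb (Or.inr le_rfl)
    have hred := isReduced_alternatingFrom cs hab (Or.inr le_rfl)
    rw [CoxeterSystem.IsReduced, length_alternatingFrom, wordProd_alternatingFrom_eq_longest] at hred
    rw [wordProd_alternatingFrom_eq_longest] at hy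
    exact hw ⟨a, b, by omega, 1, y, by rw [one_mul, ← hy], by rw [cs.length_one, hred]; omega⟩

lemma isLeftDescent_simple_mul {w : W} {a b : B} (hab : a ≠ b)
    (ha : cs.IsLeftDescent w a) (hb : cs.IsLeftDescent w b) :
    cs.IsLeftDescent (cs.simple a * w) b := by
  have h1 := M.off_diagonal a b hab
  obtain ⟨y, hy, hl⟩ := exists_eq_alternatingFrom_mul cs hab ha hb (k := 2) (by omega)
  have e : cs.simple b * (cs.simple a * w) = y := by
    rw [hy]; simp [alternatingFrom, cs.wordProd_cons, mul_assoc]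
  rw [cs.isLeftDescent_iff] at ha
  rw [IsLeftDescent, e]
  omega

/-- An element begins with the product of any distinct left descents. -/
lemma exists_eq_wordProd_mul {l : List B} (hl : l.Nodup) {w : W}
    (h : ∀ i ∈ l, cs.IsLeftDescent w i) :
    ∃ y, w = cs.wordProd l * y ∧ cs.length w = l.length + cs.length y := by
  induction l generalizing w with
  | nil => exact ⟨w, by simp, by simp⟩
  | cons i l ih =>
    rw [List.nodup_cons] at hl
    have hi := h i List.mem_cons_self
    obtain ⟨y, hy, hly⟩ := ih hl.2 (w := cs.simple i * w) fun j hj =>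
      isLeftDescent_simple_mul cs (fun e => hl.1 (e ▸ hj)) hi (h j (List.mem_cons_of_mem _ hj))
    refine ⟨y, ?_, ?_⟩
    · rw [cs.wordProd_cons, mul_assoc, ← hy, cs.simple_mul_simple_cancel_left]
    · rw [cs.isLeftDescent_iff] at hi
      rw [List.length_cons]
      omega

lemma le_nval {w w₁ w₂ w₃ : W} (h : w = w₁ * w₂ * w₃)
    (hl : cs.length w = cs.length w₁ + cs.length w₂ + cs.length w₃) (h₂ : IsCommProd cs w₂) :
    cs.length w₂ ≤ nval cs w := by
  refine le_csSup ⟨cs.length w, ?_⟩ ⟨w₁, w₂, w₃, h, hl, h₂, rfl⟩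
  rintro k ⟨v₁, v₂, v₃, -, hl', -, rfl⟩
  omega

/-- If `u * x` is a reduced product with `x` fully commutative, then `x` has at most `n(u * x)` left
descents. -/
lemma card_le_nval {x u : W} (hx : FullyComm cs x)
    (hux : cs.length (u * x) = cs.length u + cs.length x) (J : Finset B)
    (hJ : ↑J ⊆ leftDescents cs x) : J.card ≤ nval cs (u * x) := by
  have hmem : ∀ i ∈ J.toList, cs.IsLeftDescent x i := fun i hi => hJ (by simpa using hi)
  obtain ⟨y, hy, hl⟩ := exists_eq_wordProd_mul cs J.nodup_toList hmem
  have hle := cs.length_mul_le (cs.wordProd J.toList) y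
  have hle' := cs.length_wordProd_le J.toList
  rw [← hy] at hle
  have hred : cs.length (cs.wordProd J.toList) = J.toList.length := by omega
  rw [← J.length_toList, ← hred]
  refine le_nval cs (w₁ := u) (w₃ := y) (by rw [mul_assoc, ← hy]) (by omega)
    ⟨J.toList, J.nodup_toList, ?_, hred, rfl⟩
  exact fun a ha b hb hab => coxeterMatrix_eq_two_of_fullyComm cs hx hab (hmem a ha) (hmem b hb)

lemma finite_leftDescents {x : W} (hx : FullyComm cs x) : (leftDescents cs x).Finite := by
  by_contra hinf
  obtain ⟨J, hJ, hc⟩ := Set.Infinite.exists_subset_card_eq hinf (nval cs (1 * x) + 1)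
  have := card_le_nval cs hx (u := 1) (by simp) J hJ
  omega

lemma ncard_leftDescents_le_nval {x u : W} (hx : FullyComm cs x)
    (hux : cs.length (u * x) = cs.length u + cs.length x) :
    (leftDescents cs x).ncard ≤ nval cs (u * x) := by
  rw [Set.ncard_eq_toFinset_card _ (finite_leftDescents cs hx)]
  exact card_le_nval cs hx hux _ (by simp)

lemma leftDescents_simple_mul {w : W} (hw : FullyComm cs w) {s t : B}
    (hx : FullyComm cs (cs.simple s * w)) (hn : (leftDescents cs w).ncard = nval cs w)
    (hs : cs.IsLeftDescent w s) (ht : ¬ cs.IsLeftDescent w t)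
    (hxt : cs.IsLeftDescent (cs.simple s * w) t) :
    leftDescents cs (cs.simple s * w) = insert t (leftDescents cs w \ {s}) := by
  symm
  apply Set.eq_of_subset_of_ncard_le _ _ (finite_leftDescents cs hx)
  · rintro a (rfl | ⟨ha, has⟩)
    · exact hxt
    · exact isLeftDescent_simple_mul cs (Ne.symm has) hs ha
  · have hfin := finite_leftDescents cs hw
    rw [Set.ncard_insert_of_notMem (fun h => ht h.1) (hfin.subset Set.sdiff_subset),
      Set.ncard_sdiff_singleton_add_one (s := leftDescents cs w) hs hfin, hn]
    have hs' := (cs.isLeftDescent_iff).mp hs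
    have := ncard_leftDescents_le_nval cs hx (u := cs.simple s)
      (by rw [cs.simple_mul_simple_cancel_left, cs.length_simple]; omega)
    rwa [cs.simple_mul_simple_cancel_left] at this

lemma kSet_insert_diff_singleton (ε : B → Bool) {J : Set B} (hJ : J.Finite) {s t : B}
    (hs : s ∈ J) (ht : t ∉ J) (hε : ε s ≠ ε t) :
    kSet ε (insert t (J \ {s})) = - kSet ε J := by
  have hfin : (J ∩ {i | ε i = false}).Finite := hJ.subset Set.inter_subset_left
  have hts : t ∉ J \ {s} := fun h => ht h.1
  unfold kSet
  cases hεs : ε s <;> cases hεt : ε t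
  · simp_all
  · have e : insert t (J \ {s}) ∩ {i | ε i = false} = (J ∩ {i | ε i = false}) \ {s} := by
      ext i
      by_cases hi : i = t <;> by_cases hi' : i = s <;> simp_all
    have hmem : s ∈ J ∩ {i | ε i = false} := ⟨hs, hεs⟩
    rw [e, ← Set.ncard_sdiff_singleton_add_one hmem hfin, pow_succ]
    simp
  · have e : insert t (J \ {s}) ∩ {i | ε i = false} = insert t (J ∩ {i | ε i = false}) := by
      ext i
      by_cases hi : i = t <;> by_cases hi' : i = s <;> simp_all
    rw [e, Set.ncard_insert_of_notMem (fun h => ht h.1) hfin, pow_succ]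
    simp
  · simp_all

lemma rightDescents_simple_mul {w : W} {s t : B}
    (hs : cs.IsLeftDescent w s) (ht : ¬ cs.IsLeftDescent w t)
    (hxt : cs.IsLeftDescent (cs.simple s * w) t) :
    rightDescents cs (cs.simple s * w) = rightDescents cs w := by
  have hs' := (cs.isLeftDescent_iff).mp hs
  ext r
  change cs.IsRightDescent (cs.simple s * w) r ↔ cs.IsRightDescent w r
  constructor <;> intro hr
  · have h1 := cs.length_mul_le (cs.simple s) (cs.simple s * w * cs.simple r)
    rw [mul_assoc, cs.simple_mul_simple_cancel_left, cs.length_simple] at h1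
    have h2 := (cs.isRightDescent_iff).mp hr
    rw [mul_assoc] at h2
    rw [IsRightDescent]
    omega
  · by_contra hxr
    set x := cs.simple s * w with hx
    have hwx : w = cs.simple s * x := by rw [hx, cs.simple_mul_simple_cancel_left]
    have hwi : w⁻¹ = x⁻¹ * cs.simple s := by rw [hwx, mul_inv_rev, cs.inv_simple]
    have h := length_conj_mul_of_isLeftDescent cs (u := x⁻¹) (y := cs.simple s) (i := r)
      (by rw [← hwi, cs.length_inv, cs.length_inv, cs.length_simple]; omega)
      (by rwa [← hwi, cs.isLeftDescent_inv_iff]) (by rwa [cs.isLeftDescent_inv_iff])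
    rw [cs.length_simple, Nat.add_eq_right, cs.length_eq_zero_iff, inv_inv] at h
    rw [mul_eq_one_iff_eq_inv, cs.inv_simple] at h
    have hxw : w = x * cs.simple r := hwx.trans (by rw [← h]; group)
    apply ht
    have h1 := (cs.isLeftDescent_iff).mp hxt
    have h2 := cs.length_mul_le (cs.simple t * x) (cs.simple r)
    rw [mul_assoc, ← hxw, cs.length_simple] at h2
    rw [IsLeftDescent]
    omega

lemma kElt_simple_mul {ε : B → Bool} {w : W} (hw : FullyComm cs w) {s t : B}
    (hx : FullyComm cs (cs.simple s * w)) (hn : (leftDescents cs w).ncard = nval cs w)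
    (hs : cs.IsLeftDescent w s) (ht : ¬ cs.IsLeftDescent w t)
    (hxt : cs.IsLeftDescent (cs.simple s * w) t) (hε : ε s ≠ ε t) :
    kElt cs ε w = - kElt cs ε (cs.simple s * w) := by
  rw [kElt, kElt, rightDescents_simple_mul cs hs ht hxt,
    leftDescents_simple_mul cs hw hx hn hs ht hxt,
    kSet_insert_diff_singleton ε (finite_leftDescents cs hw) hs ht hε]
  ring

lemma kElt_eq_neg_of_leftStarReducible {ε : B → Bool}
    (hbip : ∀ s t : B, Noncomm M s t → ε s ≠ ε t) {w x : W} (hw : FullyComm cs w)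
    (hx : FullyComm cs x) (hn : (leftDescents cs w).ncard = nval cs w) {s t : B}
    (h : LeftStarReducible cs s t w x) : kElt cs ε w = - kElt cs ε x := by
  obtain ⟨hst, ⟨hs, ht, rfl, hxt⟩ | ⟨ht, hs, rfl, hxs⟩⟩ := h
  · exact kElt_simple_mul cs hw hx hn hs ht hxt (hbip s t hst)
  · exact kElt_simple_mul cs hw hx hn ht hs hxs (hbip s t hst).symm

lemma inv_longest (s t : B) : (longest cs s t)⁻¹ = longest cs t s := by
  rw [longest, ← cs.wordProd_reverse, reverse_alternatingWord, M.symmetric s t,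
    wordProd_alternatingFrom_eq_longest]

lemma IsComplex.of_inv {w : W} (h : IsComplex cs w⁻¹) : IsComplex cs w := by
  obtain ⟨s, t, hst, x₁, x₂, hw, hl⟩ := h
  refine ⟨t, s, by rwa [M.symmetric t s], x₂⁻¹, x₁⁻¹, ?_, ?_⟩
  · rw [← inv_inv w, hw, ← inv_longest]; group
  · rw [← inv_longest]
    simp only [cs.length_inv] at hl ⊢
    omega

lemma FullyComm.inv {w : W} (h : FullyComm cs w) : FullyComm cs w⁻¹ := fun h' => h (h'.of_inv cs)

lemma IsCommProd.inv {w : W} (h : IsCommProd cs w) : IsCommProd cs w⁻¹ := by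
  obtain ⟨l, hl, hc, hr, rfl⟩ := h
  exact ⟨l.reverse, by simpa using hl, by simpa using hc, hr.reverse, by simp⟩

lemma nval_inv (w : W) : nval cs w⁻¹ = nval cs w := by
  have key : ∀ (v : W) (k : ℕ), (∃ w₁ w₂ w₃ : W, v = w₁ * w₂ * w₃ ∧
      cs.length v = cs.length w₁ + cs.length w₂ + cs.length w₃ ∧
      IsCommProd cs w₂ ∧ cs.length w₂ = k) → ∃ w₁ w₂ w₃ : W, v⁻¹ = w₁ * w₂ * w₃ ∧
      cs.length v⁻¹ = cs.length w₁ + cs.length w₂ + cs.length w₃ ∧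
      IsCommProd cs w₂ ∧ cs.length w₂ = k := by
    rintro v k ⟨w₁, w₂, w₃, hv, hl, hc, hk⟩
    refine ⟨w₃⁻¹, w₂⁻¹, w₁⁻¹, by rw [hv]; group, ?_, hc.inv cs, by rwa [cs.length_inv]⟩
    simp only [cs.length_inv]
    omega
  unfold nval
  congr 1
  ext k
  exact ⟨fun h => inv_inv w ▸ key _ k h, key w k⟩

lemma leftDescents_inv (w : W) : leftDescents cs w⁻¹ = rightDescents cs w := by
  ext i
  exact cs.isLeftDescent_inv_iff

lemma rightDescents_inv (w : W) : rightDescents cs w⁻¹ = leftDescents cs w := by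
  ext i
  exact cs.isRightDescent_inv_iff

lemma kElt_inv (ε : B → Bool) (w : W) : kElt cs ε w⁻¹ = kElt cs ε w := by
  rw [kElt, kElt, leftDescents_inv, rightDescents_inv, mul_comm]

lemma RightStarReducible.inv {s t : B} {w x : W} (h : RightStarReducible cs s t w x) :
    LeftStarReducible cs s t w⁻¹ x⁻¹ := by
  simpa [LeftStarReducible, RightStarReducible, cs.isLeftDescent_inv_iff, inv_eq_iff_eq_inv]
    using h

end

/-- Lemma 7.6: suppose the Coxeter graph is bipartite with 2-colouring `ε`.  Let
`w ∈ W_c` satisfy `|𝓛(w)| = n(w)` (respectively `|𝓡(w)| = n(w)`), and suppose `w` is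
left (respectively right) star reducible to `x ∈ W_c`.  Then `k_ε(w) = −k_ε(x)`. -/
theorem statement10 (ε : B → Bool) (hbip : ∀ s t : B, Noncomm M s t → ε s ≠ ε t)
    (w x : W) (hw : FullyComm cs w) (hx : FullyComm cs x) :
    (((leftDescents cs w).ncard = nval cs w) →
      (∃ s t : B, LeftStarReducible cs s t w x) → kElt cs ε w = - kElt cs ε x) ∧
    (((rightDescents cs w).ncard = nval cs w) →
      (∃ s t : B, RightStarReducible cs s t w x) → kElt cs ε w = - kElt cs ε x) := by
  refine ⟨fun hn ⟨s, t, h⟩ => kElt_eq_neg_of_leftStarReducible cs hbip hw hx hn h,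
    fun hn ⟨s, t, h⟩ => ?_⟩
  rw [← kElt_inv, ← kElt_inv cs ε x]
  refine kElt_eq_neg_of_leftStarReducible cs hbip (hw.inv cs) (hx.inv cs) ?_ (h.inv cs)
  rw [leftDescents_inv, nval_inv, hn]
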